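/- Let s, s' be rational clusters of f with s proper and s' ⊄ s, and let w_s be a rational centre of s. Then min_{r∈s'} v(r − w_s) = ρ_{s∧s'}. -/

import Mathlib

open Polynomial
open scoped Classical

namespace ClusterPicture

variable {K Kbar : Type*} [Field K] [Field Kbar] [Algebra K Kbar]

lemma zero_lt_top' : (0 : WithTop ℚ) < ⊤ := by
  simp

lemma withTop_add_pos {a b : WithTop ℚ} (ha : 0 ≤ a) (hb : 0 < b) : 0 < a + b := by
  rcases eq_or_ne a ⊤ with h | h
  · subst h; rw [top_add]; exact zero_lt_top'
  · lift a to ℚ using h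
    rcases eq_or_ne b ⊤ with h' | h'
    · subst h'; rw [add_top]; exact zero_lt_top'
    · lift b to ℚ using h'
      have ha' : (0 : ℚ) ≤ a := by exact_mod_cast ha
      have hb' : (0 : ℚ) < b := by exact_mod_cast hb
      exact_mod_cast add_pos_of_nonneg_of_pos ha' hb'

/-- The setting of the paper: `K` is a complete discretely valued field, with valuation `v`
normalised so that `v(K^×) = ℤ`, `Kbar` is an algebraic closure of `K`, and `v` is (the unique)
extension of the valuation to a `ℚ ∪ {∞}`-valued valuation on `Kbar`. -/
structure Setup (K Kbar : Type*) [Field K] [Field Kbar] [Algebra K Kbar] : Type _ where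
  /-- the valuation on the algebraic closure -/
  v : Kbar → WithTop ℚ
  v_top_iff : ∀ x : Kbar, v x = ⊤ ↔ x = 0
  v_one : v 1 = 0
  v_neg : ∀ x : Kbar, v (-x) = v x
  v_mul : ∀ x y : Kbar, v (x * y) = v x + v y
  v_add : ∀ x y : Kbar, min (v x) (v y) ≤ v (x + y)
  /-- the valuation is normalised: nonzero elements of `K` have integer valuation -/
  v_base_int : ∀ x : K, x ≠ 0 → ∃ n : ℤ, v (algebraMap K Kbar x) = ((n : ℚ) : WithTop ℚ)
  /-- the valuation is surjective onto `ℤ` on `K^×`: there is a uniformiser -/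
  exists_uniformiser : ∃ π : K, v (algebraMap K Kbar π) = ((1 : ℚ) : WithTop ℚ)
  /-- `Kbar` is an algebraic closure of `K` -/
  algClosed : IsAlgClosed Kbar
  algebraic : Algebra.IsAlgebraic K Kbar
  /-- `K` is complete with respect to the valuation -/
  complete : ∀ a : ℕ → K,
    (∀ q : ℚ, ∃ N : ℕ, ∀ m, N ≤ m → ∀ n, N ≤ n →
      ((q : ℚ) : WithTop ℚ) ≤ v (algebraMap K Kbar (a m - a n))) →
    ∃ b : K, ∀ q : ℚ, ∃ N : ℕ, ∀ n, N ≤ n →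
      ((q : ℚ) : WithTop ℚ) ≤ v (algebraMap K Kbar (a n - b))

/-- Valuation of an element of the base field `K`. -/
def Setup.vK (S : Setup K Kbar) (x : K) : WithTop ℚ := S.v (algebraMap K Kbar x)

/-- The finite set of roots of `f` in the algebraic closure `Kbar`. -/
noncomputable def rootFinset (f : K[X]) : Finset Kbar :=
  (f.map (algebraMap K Kbar)).roots.toFinset

/-- A cluster for `f`: a nonempty subset of the set of roots of `f` cut out by a `v`-adic disc. -/
def IsCluster (S : Setup K Kbar) (f : K[X]) (s : Finset Kbar) : Prop :=
  s.Nonempty ∧ ∃ (z : Kbar) (δ : ℚ),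
    s = (rootFinset f).filter fun r => ((δ : ℚ) : WithTop ℚ) ≤ S.v (r - z)

/-- The depth `d_s = min_{r,r' ∈ s} v (r - r')` of a cluster. -/
noncomputable def depth (S : Setup K Kbar) (s : Finset Kbar) : WithTop ℚ :=
  s.inf fun r => s.inf fun r' => S.v (r - r')

/-- `min_{r ∈ s} v (r - z)`, for `z ∈ Kbar`. -/
noncomputable def dmin (S : Setup K Kbar) (s : Finset Kbar) (z : Kbar) : WithTop ℚ :=
  s.inf fun r => S.v (r - z)

/-- `min_{r ∈ s} v (r - w)`, for `w ∈ K`. -/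
noncomputable def dminK (S : Setup K Kbar) (s : Finset Kbar) (w : K) : WithTop ℚ :=
  dmin S s (algebraMap K Kbar w)

/-- `w ∈ K` is a rational centre of `s` if it maximises `min_{r ∈ s} v (r - w)`.
For a proper cluster `s` with rational centre `w`, the radius `ρ_s` is `dminK S s w`. -/
def IsRationalCentre (S : Setup K Kbar) (s : Finset Kbar) (w : K) : Prop :=
  ∀ w' : K, dminK S s w' ≤ dminK S s w

/-- A rational cluster: a cluster cut out by a disc with centre in `K`. -/
def IsRationalCluster (S : Setup K Kbar) (f : K[X]) (s : Finset Kbar) : Prop :=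
  s.Nonempty ∧ ∃ (w : K) (δ : ℚ),
    s = (rootFinset f).filter fun r => ((δ : ℚ) : WithTop ℚ) ≤ S.v (r - algebraMap K Kbar w)

/-- A cluster centred at `w ∈ K`. -/
def IsClusterCentredAt (S : Setup K Kbar) (f : K[X]) (w : K) (s : Finset Kbar) : Prop :=
  s.Nonempty ∧ ∃ δ : ℚ,
    s = (rootFinset f).filter fun r => ((δ : ℚ) : WithTop ℚ) ≤ S.v (r - algebraMap K Kbar w)

/-- The cluster picture of `f` is almost rational: every proper cluster `s` with
`|s| > |ρ_s|_p` satisfies `d_s = ρ_s`. -/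
def AlmostRational (S : Setup K Kbar) (f : K[X]) (p : ℕ) : Prop :=
  ∀ s : Finset Kbar, IsCluster S f s → 1 < s.card →
    ∀ (w : K) (ρ : ℚ), IsRationalCentre S s w → dminK S s w = ((ρ : ℚ) : WithTop ℚ) →
      padicNorm p ρ < (s.card : ℚ) → depth S s = ((ρ : ℚ) : WithTop ℚ)

/-- The slope of the `j`-th edge of the polygon with vertices `(i_j, c_j)`. -/
def NPslope {s : ℕ} (i : Fin (s + 1) → ℕ) (c : Fin (s + 1) → ℚ) (j : Fin s) : ℚ :=
  (c j.succ - c j.castSucc) / ((i j.succ : ℚ) - (i j.castSucc : ℚ))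

/-- `(i_0, c_0), …, (i_s, c_s)` are the vertices of the Newton polygon of `f`:
the points `(i_j, c_j)` are among the points `(m, v(a_m))`, the first and last vertices lie
above the trailing and leading coefficients, the slopes of consecutive edges strictly
increase, and every point `(m, v(a_m))` lies on or above (the line spanned by) every edge. -/
structure IsNPVertices (S : Setup K Kbar) (f : K[X]) (s : ℕ)
    (i : Fin (s + 1) → ℕ) (c : Fin (s + 1) → ℚ) : Prop where
  mono : StrictMono i
  first : i 0 = f.natTrailingDegree
  last : i (Fin.last s) = f.natDegree
  vert : ∀ j, S.vK (f.coeff (i j)) = ((c j : ℚ) : WithTop ℚ)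
  slope_mono : StrictMono (NPslope i c)
  support : ∀ (j : Fin s) (m : ℕ) (q : ℚ), S.vK (f.coeff m) = ((q : ℚ) : WithTop ℚ) →
    (c j.succ - c j.castSucc) * ((m : ℚ) - (i j.castSucc : ℚ)) ≤
      (q - c j.castSucc) * ((i j.succ : ℚ) - (i j.castSucc : ℚ))

/-- The valuation ring of `Kbar`. -/
def intRing (S : Setup K Kbar) : Subring Kbar where
  carrier := {x : Kbar | (0 : WithTop ℚ) ≤ S.v x}
  zero_mem' := by
    simp only [Set.mem_setOf_eq, (S.v_top_iff 0).mpr rfl]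
    exact le_top
  one_mem' := by
    simp only [Set.mem_setOf_eq, S.v_one]
    exact le_refl _
  add_mem' := by
    intro a b ha hb
    exact le_trans (le_min ha hb) (S.v_add a b)
  mul_mem' := by
    intro a b ha hb
    simp only [Set.mem_setOf_eq, S.v_mul a b]
    exact add_nonneg ha hb
  neg_mem' := by
    intro a ha
    simpa only [Set.mem_setOf_eq, S.v_neg] using ha

lemma mem_intRing {S : Setup K Kbar} {x : Kbar} :
    x ∈ intRing S ↔ (0 : WithTop ℚ) ≤ S.v x := Iff.rfl

/-- The maximal ideal of the valuation ring of `Kbar`. -/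
def maxIdeal (S : Setup K Kbar) : Ideal (intRing S) where
  carrier := {x : intRing S | (0 : WithTop ℚ) < S.v (x : Kbar)}
  zero_mem' := by
    show (0 : WithTop ℚ) < S.v ((0 : intRing S) : Kbar)
    rw [show ((0 : intRing S) : Kbar) = 0 from rfl, (S.v_top_iff 0).mpr rfl]
    exact zero_lt_top'
  add_mem' := by
    intro a b ha hb
    show (0 : WithTop ℚ) < S.v ((a : Kbar) + (b : Kbar))
    exact lt_of_lt_of_le (lt_min ha hb) (S.v_add _ _)
  smul_mem' := by
    intro c x hx
    show (0 : WithTop ℚ) < S.v ((c : Kbar) * (x : Kbar))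
    rw [S.v_mul]
    exact withTop_add_pos c.2 hx

/-- The residue field of `Kbar`; it is an algebraic closure of the residue field `k` of `K`. -/
abbrev Residue (S : Setup K Kbar) : Type _ := intRing S ⧸ maxIdeal S

/-- Reduction to the residue field (with junk value `0` on non-integral elements). -/
noncomputable def red (S : Setup K Kbar) (x : Kbar) : Residue S :=
  if h : (0 : WithTop ℚ) ≤ S.v x then Ideal.Quotient.mk (maxIdeal S) ⟨x, mem_intRing.mpr h⟩
  else 0

/-- The reduction `f̄|_L` of `f` along the edge `L` of its Newton polygon with endpoints
`(i₁, q₁)` and `(i₂, q₂)`, of slope `ρ = nρ / n` where `n` is the denominator of `ρ`;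
`π` is a uniformiser of `K`.  This is the reduction of `π^{-q₁}·(f|_L)(π^{-nρ}·x)`, where
`f|_L (x) = ∑_j a_{n j + i₁} x^j`. -/
noncomputable def redEdge (S : Setup K Kbar) (π : K) (f : K[X])
    (i₁ i₂ : ℕ) (q₁ nρ : ℤ) (n : ℕ) : Polynomial (Residue S) :=
  ∑ j ∈ Finset.range ((i₂ - i₁) / n + 1),
    Polynomial.C (red S (algebraMap K Kbar (f.coeff (n * j + i₁)) *
      (algebraMap K Kbar π) ^ (-(q₁ + (j : ℤ) * nρ)))) * Polynomial.X ^ j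

/-- `f` is NP-regular (`Δ_v`-regular in dimension 1): for every edge `L` of its Newton
polygon, the reduction `f̄|_L` has no multiple roots in the algebraic closure of the residue
field, i.e. is separable. -/
def NPRegular (S : Setup K Kbar) (π : K) (f : K[X]) : Prop :=
  ∀ (s : ℕ) (i : Fin (s + 1) → ℕ) (c : Fin (s + 1) → ℚ),
    IsNPVertices S f s i c →
    ∀ (j : Fin s) (q₁ nρ : ℤ) (n : ℕ),
      (q₁ : ℚ) = c j.castSucc →
      n = (NPslope i c j).den →
      (nρ : ℚ) = (n : ℚ) * NPslope i c j →
      (redEdge S π f (i j.castSucc) (i j.succ) q₁ nρ n).Separable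

/-- The vertex-index function of the Newton polygon of `f(x+w)`, in terms of the sizes of
the clusters `s_1 ⊂ … ⊂ s_{n+1}` centred at `w`; here `t` is the prescribed first index. -/
def vertIdx {n : ℕ} (t : ℕ) (s : Fin (n + 1) → Finset Kbar) : Fin (n + 2) → ℕ :=
  fun j => Fin.cases (motive := fun _ => ℕ) t (fun j' => (s j').card) j

/-- The vertex-value function of the Newton polygon of `f(x+w)`: the vertex over `|s_j|` has
second coordinate `ε_{s_j} - |s_j|·ρ_{s_j}`; `c0` is the prescribed value at the first vertex. -/
def vertVal {n : ℕ} (c0 : ℚ) (s : Fin (n + 1) → Finset Kbar) (ρ ε : Fin (n + 1) → ℚ) :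
    Fin (n + 2) → ℚ :=
  fun j => Fin.cases (motive := fun _ => ℚ) c0 (fun j' => ε j' - ((s j').card : ℚ) * ρ j') j

/-!
If `s ⊆ t`, a rational centre `w` of `s` is also one of `t`: for every other `w'` in `K`, the
minimum `min_{r ∈ t} v (r - w')` is at most `v (w' - w)`, so replacing `w'` by `w` cannot decrease
it. Hence `ρ_{s ∧ s'} = min_{r ∈ s ∧ s'} v (r - w)`. The smallest disc centred at `w` containing `s`
and `s'` cuts out a cluster, so this is the minimum of `v (r - w)` over `s ∪ s'`. It is attained
on `s'`: a root at least as close to `w` as the farthest root of `s` lies in `s`, and `s'` has a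
root outside `s`.
-/

section Valued

variable {L Γ : Type*} [Ring L] [LinearOrderedAddCommMonoidWithTop Γ] {v : AddValuation L Γ}
  {R s s' t A : Finset L} {C : Set L} {r w w' z : L}

/-- The distance `min_{r ∈ s} v (r - z)` from a finite set `s` to a point `z`, for an arbitrary
additive valuation; it is `⊤` when `s` is empty. -/
def minVal (v : AddValuation L Γ) (s : Finset L) (z : L) : Γ :=
  s.inf fun r => v (r - z)

/-- `w` is a centre of `s` relative to the set `C` of admissible centres. The rational centres are
the case where `C` is the image of the base field. -/
def IsCentreIn (v : AddValuation L Γ) (C : Set L) (s : Finset L) (w : L) : Prop :=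
  w ∈ C ∧ IsMaxOn (minVal v s) C w

/-- `s` is a cluster of the finite set `R`, cut out by a disc with a centre in `C`. Rational
clusters are the case where `C` is the image of the base field, arbitrary clusters the case
`C = Set.univ`. The radius `⊤` is excluded because the paper takes rational radii. -/
def IsClusterCentredIn (v : AddValuation L Γ) (R : Finset L) (C : Set L) (s : Finset L) : Prop :=
  s.Nonempty ∧ ∃ c ∈ C, ∃ δ ≠ ⊤, ∀ r, r ∈ s ↔ r ∈ R ∧ δ ≤ v (r - c)

lemma min_map_sub_le_map_sub (v : AddValuation L Γ) (x y z : L) :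
    min (v (x - y)) (v (y - z)) ≤ v (x - z) := by
  simpa only [sub_add_sub_cancel] using v.map_add (x - y) (y - z)

lemma minVal_le (hr : r ∈ s) : minVal v s z ≤ v (r - z) :=
  Finset.inf_le hr

lemma minVal_anti (hst : s ⊆ t) : minVal v t z ≤ minVal v s z :=
  Finset.inf_mono hst

lemma min_minVal_map_sub_le_minVal : min (minVal v s w) (v (w - z)) ≤ minVal v s z :=
  Finset.le_inf fun r hr =>
    (min_le_min_right _ (minVal_le hr)).trans (min_map_sub_le_map_sub v r w z)

lemma min_minVal_minVal_le_map_sub (hs : s.Nonempty) :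
    min (minVal v s w) (minVal v s z) ≤ v (w - z) := by
  obtain ⟨r, hr⟩ := hs
  calc min (minVal v s w) (minVal v s z)
      ≤ min (v (w - r)) (v (r - z)) :=
        min_le_min ((minVal_le hr).trans_eq (v.map_sub_swap r w)) (minVal_le hr)
    _ ≤ v (w - z) := min_map_sub_le_map_sub v w r z

lemma IsCentreIn.minVal_eq (hw : IsCentreIn v C s w) (hw' : IsCentreIn v C s w') :
    minVal v s w = minVal v s w' :=
  le_antisymm (hw'.2 hw.1) (hw.2 hw'.1)

lemma IsCentreIn.mono (hw : IsCentreIn v C s w) (hs : s.Nonempty) (hst : s ⊆ t) :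
    IsCentreIn v C t w := by
  refine ⟨hw.1, fun w' hw' => ?_⟩
  have hclose : minVal v t w' ≤ v (w' - w) :=
    calc minVal v t w' ≤ minVal v s w' := minVal_anti hst
      _ = min (minVal v s w') (minVal v s w) := (min_eq_left (hw.2 hw')).symm
      _ ≤ v (w' - w) := min_minVal_minVal_le_map_sub hs
  calc minVal v t w' = min (minVal v t w') (v (w' - w)) := (min_eq_left hclose).symm
    _ ≤ minVal v t w := min_minVal_map_sub_le_minVal

lemma IsClusterCentredIn.subset (hs : IsClusterCentredIn v R C s) : s ⊆ R := by
  obtain ⟨-, c, -, δ, -, hmem⟩ := hs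
  exact fun r hr => ((hmem r).mp hr).1

lemma IsClusterCentredIn.mem_of_minVal_le (hs : IsClusterCentredIn v R C s)
    (hw : IsCentreIn v C s w) (hr : r ∈ R) (h : minVal v s w ≤ v (r - w)) : r ∈ s := by
  obtain ⟨hne, c, hc, δ, -, hmem⟩ := hs
  have hδc : δ ≤ minVal v s c :=
    Finset.le_inf fun x hx => ((hmem x).mp hx).2
  have hδw : δ ≤ minVal v s w := hδc.trans (hw.2 hc)
  have hδwc : δ ≤ v (w - c) := (le_min hδw hδc).trans (min_minVal_minVal_le_map_sub hne)
  have hδr : δ ≤ v (r - c) :=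
    (le_min (hδw.trans h) hδwc).trans (min_map_sub_le_map_sub v r w c)
  exact (hmem r).mpr ⟨hr, hδr⟩

lemma IsClusterCentredIn.minVal_lt_of_not_subset (hs : IsClusterCentredIn v R C s)
    (hw : IsCentreIn v C s w) (hs' : s' ⊆ R) (hnsub : ¬ s' ⊆ s) :
    minVal v s' w < minVal v s w := by
  obtain ⟨r, hrs', hrs⟩ := Finset.not_subset.mp hnsub
  have hr : v (r - w) < minVal v s w :=
    lt_of_not_ge fun h => hrs (hs.mem_of_minVal_le hw (hs' hrs') h)
  exact (minVal_le hrs').trans_lt hr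

lemma minVal_eq_of_isLeast (hA : A.Nonempty) (hAR : A ⊆ R)
    (ht : IsLeast {u | IsClusterCentredIn v R Set.univ u ∧ A ⊆ u} t) (hfin : minVal v A z ≠ ⊤) :
    minVal v t z = minVal v A z := by
  let u := R.filter fun r => minVal v A z ≤ v (r - z)
  have hAu : A ⊆ u := fun r hr => Finset.mem_filter.mpr ⟨hAR hr, minVal_le hr⟩
  have hcluster : IsClusterCentredIn v R Set.univ u :=
    ⟨hA.mono hAu, z, Set.mem_univ z, minVal v A z, hfin,
      fun _ => Finset.mem_filter⟩
  have htu : t ⊆ u := ht.2 ⟨hcluster, hAu⟩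
  exact le_antisymm (minVal_anti ht.1.2)
    (Finset.le_inf fun r hr => (Finset.mem_filter.mp (htu hr)).2)

theorem dmin_eq_radius_of_wedge_general (hs : IsClusterCentredIn v R C s) (hs' : s' ⊆ R)
    (hnsub : ¬ s' ⊆ s) (hw : IsCentreIn v C s w)
    (ht : IsLeast {u | IsClusterCentredIn v R Set.univ u ∧ s ∪ s' ⊆ u} t)
    (hw' : IsCentreIn v C t w') :
    minVal v s' w = minVal v t w' := by
  have hlt : minVal v s' w < minVal v s w := hs.minVal_lt_of_not_subset hw hs' hnsub
  have hunion : minVal v (s ∪ s') w = minVal v s' w :=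
    Finset.inf_union.trans (min_eq_right hlt.le)
  have hst : s ⊆ t := Finset.union_subset_left ht.1.2
  calc minVal v s' w = minVal v (s ∪ s') w := hunion.symm
    _ = minVal v t w :=
      (minVal_eq_of_isLeast (hs.1.mono Finset.subset_union_left)
        (Finset.union_subset hs.subset hs') ht (hunion ▸ hlt.ne_top)).symm
    _ = minVal v t w' := (hw.mono hs.1 hst).minVal_eq hw'

end Valued

section Setup

variable {S : Setup K Kbar} {f : K[X]} {s : Finset Kbar} {w : K}

/-- The valuation of `S` as a Mathlib `AddValuation`, through which results on general valued rings
apply to `S`. -/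
def Setup.addValuation (S : Setup K Kbar) : AddValuation Kbar (WithTop ℚ) :=
  AddValuation.of S.v ((S.v_top_iff 0).mpr rfl) S.v_one S.v_add S.v_mul

lemma isRationalCentre_iff : IsRationalCentre S s w ↔
    IsCentreIn S.addValuation (Set.range (algebraMap K Kbar)) s (algebraMap K Kbar w) := by
  simp only [IsCentreIn, Set.mem_range_self, true_and, isMaxOn_iff, Set.forall_mem_range]
  rfl

lemma isRationalCluster_iff : IsRationalCluster S f s ↔
    IsClusterCentredIn S.addValuation (rootFinset f) (Set.range (algebraMap K Kbar)) s := by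
  simp [IsClusterCentredIn, IsRationalCluster, WithTop.exists, Finset.ext_iff, Setup.addValuation]

lemma isCluster_iff : IsCluster S f s ↔
    IsClusterCentredIn S.addValuation (rootFinset f) Set.univ s := by
  simp [IsClusterCentredIn, IsCluster, WithTop.exists, Finset.ext_iff, Setup.addValuation]

end Setup

/-- **Distance to another rational cluster.** Let `s, s'` be rational clusters with `s`
proper and `s' ⊄ s`, let `w` be a rational centre of `s`, and let `t = s ∧ s'` be the
smallest cluster containing both. Then `min_{r ∈ s'} v(r − w) = ρ_{s ∧ s'}` (the radius of
`t`, computed at any rational centre `wt` of `t`). -/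
theorem dmin_eq_radius_of_wedge
    (S : Setup K Kbar) (f : K[X]) (hsep : f.Separable) (hdeg : 1 ≤ f.natDegree)
    (s s' t : Finset Kbar)
    (hs : IsRationalCluster S f s) (hproper : 1 < s.card)
    (hs' : IsRationalCluster S f s') (hnsub : ¬ s' ⊆ s)
    (w : K) (hw : IsRationalCentre S s w)
    (ht : IsCluster S f t) (hst : s ⊆ t) (hs't : s' ⊆ t)
    (hmin : ∀ u : Finset Kbar, IsCluster S f u → s ⊆ u → s' ⊆ u → t ⊆ u)
    (wt : K) (hwt : IsRationalCentre S t wt) :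
    dminK S s' w = dminK S t wt := by
  have hwedge : IsLeast {u | IsClusterCentredIn S.addValuation (rootFinset f) Set.univ u ∧
      s ∪ s' ⊆ u} t :=
    ⟨⟨isCluster_iff.mp ht, Finset.union_subset hst hs't⟩, fun u ⟨hu, hsub⟩ =>
      hmin u (isCluster_iff.mpr hu) (Finset.union_subset_left hsub)
        (Finset.union_subset_right hsub)⟩
  exact dmin_eq_radius_of_wedge_general (isRationalCluster_iff.mp hs)
    (isRationalCluster_iff.mp hs').subset hnsub (isRationalCentre_iff.mp hw) hwedge
    (isRationalCentre_iff.mp hwt)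

end ClusterPicture
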